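/- arXiv:2408.13713 — 6 statements merged into one kernel-verified Lean document; each statement's English description precedes it below -/
import Mathlib

section
/- Let m, a, b, c be natural numbers with b ≤ a, c ≤ a, and a ≤ 2m. Then, as real numbers, binom(2m, a) / binom(3m, a) ≤ (2/3)^((a + b + c)/3), where the exponent (a + b + c)/3 is a real number and the power is the real power function. -/
/-!
The ratio `n.choose k / N.choose k` is the product of the `k` factors `(n - i) / (N - i)`. If
`n ≤ r * N` with `r ≤ 1`, then `n - i ≤ r * N - i ≤ r * (N - i)`, so every factor is at most `r` and
the ratio is at most `r ^ k`, hence at most `r ^ x` for every `x ≤ k`. For a Pauli attack,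
`r = 2 / 3` and `x = (a + b + c) / 3`.
-/

section OrderedRing

variable {R : Type*} [CommRing R] [LinearOrder R] [IsStrictOrderedRing R] {r : R} {n N : ℕ}

theorem cast_sub_le_mul_cast_sub (hr₀ : 0 ≤ r) (hr₁ : r ≤ 1) (hn : (n : R) ≤ r * N) (i : ℕ) :
    ((n - i : ℕ) : R) ≤ r * (N - i : ℕ) := by
  rcases le_total n i with hni | hin
  · rw [Nat.sub_eq_zero_of_le hni, Nat.cast_zero]
    positivity
  · have hnN : n ≤ N := by
      exact_mod_cast hn.trans (mul_le_of_le_one_left N.cast_nonneg hr₁)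
    rw [Nat.cast_sub hin, Nat.cast_sub (hin.trans hnN), mul_sub]
    exact sub_le_sub hn (mul_le_of_le_one_left i.cast_nonneg hr₁)

theorem cast_descFactorial_le_pow_mul_cast_descFactorial (hr₀ : 0 ≤ r) (hr₁ : r ≤ 1)
    (hn : (n : R) ≤ r * N) (k : ℕ) :
    (n.descFactorial k : R) ≤ r ^ k * N.descFactorial k := by
  simp only [Nat.descFactorial_eq_prod_range, Nat.cast_prod]
  calc ∏ i ∈ Finset.range k, ((n - i : ℕ) : R)
      ≤ ∏ i ∈ Finset.range k, r * ((N - i : ℕ) : R) :=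
        Finset.prod_le_prod (fun _ _ ↦ Nat.cast_nonneg _)
          fun i _ ↦ cast_sub_le_mul_cast_sub hr₀ hr₁ hn i
    _ = r ^ k * ∏ i ∈ Finset.range k, ((N - i : ℕ) : R) := by
        rw [Finset.prod_mul_distrib, Finset.prod_const, Finset.card_range]

theorem cast_choose_le_pow_mul_cast_choose (hr₀ : 0 ≤ r) (hr₁ : r ≤ 1) (hn : (n : R) ≤ r * N)
    (k : ℕ) :
    (n.choose k : R) ≤ r ^ k * N.choose k := by
  have hk : (0 : R) < k.factorial := by exact_mod_cast k.factorial_pos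
  refine le_of_mul_le_mul_left ?_ hk
  calc (k.factorial : R) * n.choose k
      = n.descFactorial k := by rw [Nat.descFactorial_eq_factorial_mul_choose, Nat.cast_mul]
    _ ≤ r ^ k * N.descFactorial k :=
        cast_descFactorial_le_pow_mul_cast_descFactorial hr₀ hr₁ hn k
    _ = k.factorial * (r ^ k * N.choose k) := by
        rw [Nat.descFactorial_eq_factorial_mul_choose, Nat.cast_mul, mul_left_comm]

end OrderedRing

theorem binom_ratio_rpow_two_thirds_general {r x : ℝ} {n N k : ℕ} (hr₀ : 0 < r) (hr₁ : r ≤ 1)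
    (hn : (n : ℝ) ≤ r * N) (hk : k ≤ N) (hx : x ≤ k) :
    (n.choose k : ℝ) / N.choose k ≤ r ^ x := by
  have hpos : (0 : ℝ) < N.choose k := by exact_mod_cast Nat.choose_pos hk
  calc (n.choose k : ℝ) / N.choose k
      ≤ r ^ k := (div_le_iff₀ hpos).mpr (cast_choose_le_pow_mul_cast_choose hr₀.le hr₁ hn k)
    _ = r ^ (k : ℝ) := (Real.rpow_natCast r k).symm
    _ ≤ r ^ x := Real.rpow_le_rpow_of_exponent_ge hr₀ hr₁ hx

theorem binom_ratio_rpow_two_thirds (m a b c : ℕ) (hb : b ≤ a) (hc : c ≤ a)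
    (ha : a ≤ 2 * m) :
    ((2 * m).choose a : ℝ) / ((3 * m).choose a : ℝ) ≤
      ((2 : ℝ) / 3) ^ (((a : ℝ) + b + c) / 3) := by
  have hx : ((a : ℝ) + b + c) / 3 ≤ a := by
    linarith [(Nat.cast_le (α := ℝ)).mpr hb, (Nat.cast_le (α := ℝ)).mpr hc]
  exact binom_ratio_rpow_two_thirds_general (by norm_num) (by norm_num)
    (by push_cast; linarith) (by lia) hx
end

section
/- Let m, a, b, c be natural numbers with a ≤ c, b ≤ c, and c ≤ m. Then, as real numbers, binom(m, c) / binom(3m, c) ≤ (1/3)^((a + b + c)/3), where the exponent (a + b + c)/3 is a real number and the power is the real power function. -/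
/-!
Draw `c` elements without replacement from a set of `n` elements, `m` of which are marked, where
`m / n ≤ x ≤ 1`. Given that the first `i` draws are marked, the next one is marked with probability
`(m - i) / (n - i) ≤ x`, so all `c` draws are marked with probability at most `x ^ c`.
-/

section OrderedRing

variable {R : Type*} [CommRing R] [LinearOrder R] [IsStrictOrderedRing R] {x : R} {m n : ℕ}

theorem cast_tsub_le_mul_cast_tsub (hx₀ : 0 ≤ x) (hx₁ : x ≤ 1) (hmn : (m : R) ≤ x * n) (i : ℕ) :
    ((m - i : ℕ) : R) ≤ x * ((n - i : ℕ) : R) := by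
  rcases le_total m i with hmi | him
  · rw [Nat.sub_eq_zero_of_le hmi, Nat.cast_zero]
    positivity
  · have hn : (n : R) ≤ (n - i : ℕ) + i := mod_cast le_tsub_add
    calc ((m - i : ℕ) : R) = m - i := Nat.cast_sub him
      _ ≤ x * n - x * i := sub_le_sub hmn (mul_le_of_le_one_left i.cast_nonneg hx₁)
      _ = x * (n - i) := (mul_sub ..).symm
      _ ≤ x * (n - i : ℕ) := mul_le_mul_of_nonneg_left (sub_le_iff_le_add.mpr hn) hx₀

theorem cast_descFactorial_le_pow_mul (hx₀ : 0 ≤ x) (hx₁ : x ≤ 1) (hmn : (m : R) ≤ x * n)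
    (c : ℕ) : (m.descFactorial c : R) ≤ x ^ c * n.descFactorial c := by
  simp only [Nat.descFactorial_eq_prod_range, Nat.cast_prod]
  calc ∏ i ∈ Finset.range c, ((m - i : ℕ) : R)
      ≤ ∏ i ∈ Finset.range c, x * ((n - i : ℕ) : R) :=
        Finset.prod_le_prod (fun _ _ ↦ Nat.cast_nonneg _)
          fun i _ ↦ cast_tsub_le_mul_cast_tsub hx₀ hx₁ hmn i
    _ = x ^ c * ∏ i ∈ Finset.range c, ((n - i : ℕ) : R) := by
        rw [Finset.prod_mul_distrib, Finset.prod_const, Finset.card_range]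

theorem cast_choose_le_pow_mul (hx₀ : 0 ≤ x) (hx₁ : x ≤ 1) (hmn : (m : R) ≤ x * n) (c : ℕ) :
    (m.choose c : R) ≤ x ^ c * n.choose c := by
  have hfactorial : (0 : R) < c.factorial := mod_cast c.factorial_pos
  have hdesc := cast_descFactorial_le_pow_mul hx₀ hx₁ hmn c
  simp only [Nat.descFactorial_eq_factorial_mul_choose, Nat.cast_mul] at hdesc
  rw [mul_left_comm] at hdesc
  exact le_of_mul_le_mul_left hdesc hfactorial

end OrderedRing

theorem binom_ratio_rpow_one_third_general {m n c : ℕ} {x s : ℝ} (hx₀ : 0 < x) (hx₁ : x ≤ 1)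
    (hmn : (m : ℝ) ≤ x * n) (hc : c ≤ n) (hs : s ≤ c) :
    (m.choose c : ℝ) / n.choose c ≤ x ^ s := by
  have hpos : (0 : ℝ) < n.choose c := mod_cast Nat.choose_pos hc
  calc (m.choose c : ℝ) / n.choose c
      ≤ x ^ c := (div_le_iff₀ hpos).mpr (cast_choose_le_pow_mul hx₀.le hx₁ hmn c)
    _ = x ^ (c : ℝ) := (Real.rpow_natCast x c).symm
    _ ≤ x ^ s := Real.rpow_le_rpow_of_exponent_ge hx₀ hx₁ hs

theorem binom_ratio_rpow_one_third (m a b c : ℕ) (ha : a ≤ c) (hb : b ≤ c)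
    (hc : c ≤ m) :
    ((m.choose c : ℝ)) / (((3 * m).choose c : ℝ)) ≤
      ((1 : ℝ) / 3) ^ (((a : ℝ) + b + c) / 3) := by
  have hweight : (a : ℝ) + b + c ≤ 3 * c := by exact_mod_cast (by omega : a + b + c ≤ 3 * c)
  exact binom_ratio_rpow_one_third_general (by norm_num) (by norm_num)
    (by push_cast; linarith) (by omega) (by linarith)
end

section
/- Let θ : ℝ and s₀ ∈ {0, 1}. Let Bell = (e₀ ⊗ₖ e₀ + e₁ ⊗ₖ e₁)/√2 ∈ ℂ⁴ and let v = (e₀ + (-1)^{s₀} · exp(-I·θ) · e₁)/√2 ∈ ℂ². Then applying the partial contraction (vᴴ ⊗ I) to Bell yields (exp(I·θ/2)/√2) • (Z^{s₀} · R_Z(θ)) |+⟩; in particular, up to the global phase exp(I·θ/2) and normalization 1/√2, the unmeasured half of the Bell pair is in the state Z^{s₀} R_Z(θ) |+⟩. -/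
open Matrix Kronecker Complex

noncomputable section

/-- Pauli X -/
def X2 : Matrix (Fin 2) (Fin 2) ℂ := !![0, 1; 1, 0]

/-- Pauli Z -/
def Z2 : Matrix (Fin 2) (Fin 2) ℂ := !![1, 0; 0, -1]

/-- Hadamard -/
def H2 : Matrix (Fin 2) (Fin 2) ℂ := (1 / (Real.sqrt 2 : ℂ)) • !![1, 1; 1, -1]

/-- Z-rotation R_Z(φ) -/
def RZ (φ : ℝ) : Matrix (Fin 2) (Fin 2) ℂ :=
  !![Complex.exp (-(Complex.I * φ / 2)), 0; 0, Complex.exp (Complex.I * φ / 2)]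

/-- standard basis vector of ℂ² -/
def e (i : Fin 2) : Fin 2 → ℂ := fun j => if j = i then 1 else 0

/-- Kronecker (tensor) product of two qubit state vectors -/
def tensorVec (a b : Fin 2 → ℂ) : Fin 2 × Fin 2 → ℂ := fun p => a p.1 * b p.2

/-- partial contraction (vᴴ ⊗ I) : ℂ⁴ → ℂ², (vᴴ ⊗ I)(a ⊗ₖ b) = ⟨v,a⟩ • b -/
def contractL (v : Fin 2 → ℂ) (u : Fin 2 × Fin 2 → ℂ) : Fin 2 → ℂ :=
  fun j => ∑ i, (starRingEnd ℂ) (v i) * u (i, j)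

/-- partial contraction (I ⊗ wᴴ) : ℂ⁴ → ℂ², (I ⊗ wᴴ)(a ⊗ₖ b) = ⟨w,b⟩ • a -/
def contractR (w : Fin 2 → ℂ) (u : Fin 2 × Fin 2 → ℂ) : Fin 2 → ℂ :=
  fun i => ∑ j, (starRingEnd ℂ) (w j) * u (i, j)

/-- controlled-NOT with the first factor as control -/
def CX : Matrix (Fin 2 × Fin 2) (Fin 2 × Fin 2) ℂ :=
  fun p q => if p.1 = q.1 ∧ p.2 = q.1 + q.2 then 1 else 0

/-!
Contracting the first factor of the unnormalized Bell vector `∑ i, eᵢ ⊗ eᵢ` with `v` returns the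
entrywise conjugate of `v`. Conjugating the measurement vector turns `exp (-iθ)` into `exp (iθ)`,
and `exp (iθ/2)` is exactly the phase that normalizes the first diagonal entry of `Z^s R_Z(θ)` to
`1`, so both sides are multiples of `e₀ + (-1)^s exp (iθ) e₁`.
-/

theorem contractL_add (v : Fin 2 → ℂ) (u w : Fin 2 × Fin 2 → ℂ) :
    contractL v (u + w) = contractL v u + contractL v w := by
  ext j
  simp only [contractL, Pi.add_apply, mul_add, Finset.sum_add_distrib]

theorem contractL_smul_left (c : ℂ) (v : Fin 2 → ℂ) (u : Fin 2 × Fin 2 → ℂ) :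
    contractL (c • v) u = star c • contractL v u := by
  ext j
  simp only [contractL, Pi.smul_apply, smul_eq_mul, map_mul, mul_assoc, Finset.mul_sum,
    starRingEnd_apply]

theorem contractL_smul_right (c : ℂ) (v : Fin 2 → ℂ) (u : Fin 2 × Fin 2 → ℂ) :
    contractL v (c • u) = c • contractL v u := by
  ext j
  simp only [contractL, Pi.smul_apply, smul_eq_mul, mul_left_comm, Finset.mul_sum]

theorem contractL_tensorVec (v a b : Fin 2 → ℂ) :
    contractL v (tensorVec a b) = (star v ⬝ᵥ a) • b := by
  ext j
  simp only [contractL, tensorVec, dotProduct, Pi.smul_apply, Pi.star_apply, smul_eq_mul,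
    Finset.sum_mul, mul_assoc, starRingEnd_apply]

theorem e_eq_single (i : Fin 2) : e i = Pi.single i 1 := by
  ext j
  simp only [e, Pi.single_apply]

theorem smul_e_zero_add_smul_e_one (v : Fin 2 → ℂ) : v 0 • e 0 + v 1 • e 1 = v := by
  ext j
  fin_cases j <;> simp [e]

theorem contractL_bell (v : Fin 2 → ℂ) :
    contractL v (tensorVec (e 0) (e 0) + tensorVec (e 1) (e 1)) = star v := by
  rw [contractL_add, contractL_tensorVec, contractL_tensorVec]
  simpa only [e_eq_single, dotProduct_single_one] using smul_e_zero_add_smul_e_one (star v)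

theorem star_e (i : Fin 2) : star (e i) = e i := by
  rw [e_eq_single, ← Pi.single_star, star_one]

theorem diagonal_mulVec_e_zero_add_e_one (d : Fin 2 → ℂ) :
    diagonal d *ᵥ (e 0 + e 1) = d 0 • e 0 + d 1 • e 1 := by
  simp only [e_eq_single, mulVec_add, diagonal_mulVec_single, mul_one, ← Pi.single_smul,
    smul_eq_mul]

theorem Z2_eq_diagonal : Z2 = diagonal ![1, -1] := by
  rw [Z2, diagonal_fin_two]
  rfl

theorem RZ_eq_diagonal (θ : ℝ) : RZ θ = diagonal ![exp (-(I * θ / 2)), exp (I * θ / 2)] := by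
  rw [RZ, diagonal_fin_two]
  rfl

theorem exp_half_smul_Z2_pow_mul_RZ (n : ℕ) (θ : ℝ) :
    exp (I * θ / 2) • (Z2 ^ n * RZ θ) = diagonal ![1, (-1) ^ n * exp (I * θ)] := by
  have phase_cancel : exp (I * θ / 2) * exp (-(I * θ / 2)) = 1 := by
    rw [← exp_add, add_neg_cancel, exp_zero]
  have phase_double : exp (I * θ / 2) * exp (I * θ / 2) = exp (I * θ) := by
    rw [← exp_add, add_halves]
  rw [Z2_eq_diagonal, RZ_eq_diagonal, diagonal_pow, diagonal_mul_diagonal, ← diagonal_smul]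
  congr 1
  ext j
  fin_cases j
  · simp [phase_cancel]
  · simp [mul_left_comm, phase_double]

theorem star_neg_one_pow_mul_exp (n : ℕ) (θ : ℝ) :
    star ((-1) ^ n * exp (-(I * θ))) = (-1) ^ n * exp (I * θ) := by
  rw [← starRingEnd_apply, map_mul, ← exp_conj]
  simp only [map_pow, map_neg, map_one, map_mul, conj_I, conj_ofReal, neg_mul, neg_neg]

theorem star_measurement_vector_eq_smul_mulVec (n : ℕ) (θ : ℝ) :
    star (e 0 + ((-1) ^ n * exp (-(I * θ))) • e 1) =
      exp (I * θ / 2) • (Z2 ^ n * RZ θ) *ᵥ (e 0 + e 1) := by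
  rw [← smul_mulVec, exp_half_smul_Z2_pow_mul_RZ, diagonal_mulVec_e_zero_add_e_one, star_add,
    star_smul, star_e, star_e, star_neg_one_pow_mul_exp]
  simp only [cons_val_zero, cons_val_one, one_smul]

/-- Eq. (5): measuring one half of a Bell pair in the basis M(-θ) with outcome s₀
leaves the other half in the state Z^{s₀} R_Z(θ)|+⟩, up to global phase exp(Iθ/2)
and the normalization 1/√2. -/
theorem bell_half_state (θ : ℝ) (s₀ : ℕ) (hs₀ : s₀ ≤ 1) :
    contractL
      ((1 / (Real.sqrt 2 : ℂ)) •
        (e 0 + ((-1 : ℂ) ^ s₀ * Complex.exp (-(Complex.I * θ))) • e 1))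
      ((1 / (Real.sqrt 2 : ℂ)) • (tensorVec (e 0) (e 0) + tensorVec (e 1) (e 1)))
    = (Complex.exp (Complex.I * θ / 2) / (Real.sqrt 2 : ℂ)) •
        (Z2 ^ s₀ * RZ θ).mulVec ((1 / (Real.sqrt 2 : ℂ)) • (e 0 + e 1)) := by
  have star_normalization : star (1 / (Real.sqrt 2 : ℂ)) = 1 / (Real.sqrt 2 : ℂ) := by
    rw [← starRingEnd_apply, map_div₀, map_one, conj_ofReal]
  calc
    _ = (1 / (Real.sqrt 2 : ℂ)) • (1 / (Real.sqrt 2 : ℂ)) •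
          star (e 0 + ((-1) ^ s₀ * exp (-(I * θ))) • e 1) := by
        rw [contractL_smul_left, contractL_smul_right, contractL_bell, star_normalization]
    _ = (1 / (Real.sqrt 2 : ℂ)) • (1 / (Real.sqrt 2 : ℂ)) •
          exp (I * θ / 2) • (Z2 ^ s₀ * RZ θ) *ᵥ (e 0 + e 1) := by
        rw [star_measurement_vector_eq_smul_mulVec]
    _ = _ := by
        rw [mulVec_smul]
        module
end
end

section
/- Let ψ ∈ ℂ², θ : ℝ, and s₁ ∈ {0, 1}. Let v_θ = (e₀ + exp(I·θ) · e₁)/√2 ∈ ℂ². Then applying the partial contraction (I ⊗ e_{s₁}ᴴ) to the vector (H ⊗ₖ 1) · CX · (ψ ⊗ₖ v_θ) ∈ ℂ⁴ yields (exp(I·θ/2)/√2) • (H · R_Z((-1)^{s₁} · θ)) ψ. -/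
open Matrix Kronecker Complex

noncomputable section

theorem kronecker_one_mulVec_apply {l m n R : Type*} [Fintype m] [Fintype n] [DecidableEq n]
    [NonAssocSemiring R] (A : Matrix l m R) (u : m × n → R) (i : l) (j : n) :
    ((A ⊗ₖ (1 : Matrix n n R)) *ᵥ u) (i, j) = ∑ k, A i k * u (k, j) := by
  simp [mulVec, dotProduct, Fintype.sum_prod_type, one_apply]

theorem contractR_kronecker_one_mulVec (A : Matrix (Fin 2) (Fin 2) ℂ) (w : Fin 2 → ℂ)
    (u : Fin 2 × Fin 2 → ℂ) :
    contractR w ((A ⊗ₖ (1 : Matrix (Fin 2) (Fin 2) ℂ)) *ᵥ u) = A *ᵥ contractR w u := by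
  funext i
  calc
    _ = ∑ j, starRingEnd ℂ (w j) * ∑ k, A i k * u (k, j) := by
      simp only [contractR, kronecker_one_mulVec_apply]
    _ = ∑ k, A i k * ∑ j, starRingEnd ℂ (w j) * u (k, j) := by
      simp only [Finset.mul_sum, mul_left_comm]
      exact Finset.sum_comm
    _ = (A *ᵥ contractR w u) i := rfl

theorem contractR_e_apply (s : Fin 2) (u : Fin 2 × Fin 2 → ℂ) (i : Fin 2) :
    contractR (e s) u i = u (i, s) := by
  simp [contractR, e]

theorem CX_mulVec_apply (u : Fin 2 × Fin 2 → ℂ) (i j : Fin 2) :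
    (CX *ᵥ u) (i, j) = u (i, i + j) := by
  -- Addition of `i` is an involution of `Fin 2`, so `j = i + l` can be solved for `l`.
  have index_iff : ∀ q : Fin 2 × Fin 2, (i = q.1 ∧ j = q.1 + q.2) ↔ q = (i, i + j) := by
    decide +revert
  have row_eq_single : CX (i, j) = Pi.single (i, i + j) 1 := by
    funext q
    simp only [CX, index_iff, Pi.single_apply]
  rw [mulVec, row_eq_single, single_one_dotProduct]

theorem contractR_e_CX_mulVec_tensorVec (ψ v : Fin 2 → ℂ) (s : Fin 2) :
    contractR (e s) (CX *ᵥ tensorVec ψ v) = diagonal (fun i => v (i + s)) *ᵥ ψ := by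
  funext i
  rw [contractR_e_apply, CX_mulVec_apply, mulVec_diagonal, tensorVec, mul_comm]

/-- The equatorial state of the Bloch sphere with azimuth `θ`, in which the ancilla is prepared;
the relative phase is on `e 1`. -/
def phaseState (θ : ℝ) : Fin 2 → ℂ :=
  (1 / (Real.sqrt 2 : ℂ)) • (e 0 + Complex.exp (Complex.I * θ) • e 1)

theorem exp_smul_RZ (φ : ℝ) : exp (I * φ / 2) • RZ φ = diagonal ![1, exp (I * φ)] := by
  ext i j
  fin_cases i <;> fin_cases j <;> simp [RZ, ← exp_add]

theorem exp_smul_RZ_neg (φ : ℝ) : exp (I * φ / 2) • RZ (-φ) = diagonal ![exp (I * φ), 1] := by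
  ext i j
  fin_cases i <;> fin_cases j <;> simp [RZ, ← exp_add, neg_div]

theorem diagonal_phaseState_add (θ : ℝ) (s : Fin 2) :
    diagonal (fun i => phaseState θ (i + s)) =
      (exp (I * θ / 2) / (Real.sqrt 2 : ℂ)) • RZ ((-1 : ℝ) ^ (s : ℕ) * θ) := by
  rw [div_eq_inv_mul, mul_smul]
  fin_cases s
  · have phaseState_add_zero :
        (fun i => phaseState θ (i + 0)) = (Real.sqrt 2 : ℂ)⁻¹ • ![1, exp (I * θ)] := by
      funext i
      fin_cases i <;> simp [phaseState, e]
    simp only [Fin.zero_eta, phaseState_add_zero, diagonal_smul, pow_zero, one_mul, exp_smul_RZ]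
  · have phaseState_add_one :
        (fun i => phaseState θ (i + 1)) = (Real.sqrt 2 : ℂ)⁻¹ • ![exp (I * θ), 1] := by
      funext i
      fin_cases i <;> simp [phaseState, e]
    simp only [Fin.mk_one, phaseState_add_one, diagonal_smul, pow_one, neg_one_mul,
      exp_smul_RZ_neg]

/-- Eqs. (15)–(16): coupling the register ψ with an ancilla in state
(e₀ + e^{iθ}e₁)/√2 via (H ⊗ 1)·CX and projecting the ancilla onto the Z-basis
outcome s₁ leaves the register in H R_Z((-1)^{s₁}θ) ψ, up to global phase
exp(Iθ/2) and normalization 1/√2. -/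
theorem first_coupling_step (ψ : Fin 2 → ℂ) (θ : ℝ) (s₁ : Fin 2) :
    contractR (e s₁)
      (((H2 ⊗ₖ (1 : Matrix (Fin 2) (Fin 2) ℂ)) * CX).mulVec
        (tensorVec ψ ((1 / (Real.sqrt 2 : ℂ)) • (e 0 + Complex.exp (Complex.I * θ) • e 1))))
    = (Complex.exp (Complex.I * θ / 2) / (Real.sqrt 2 : ℂ)) •
        (H2 * RZ ((-1 : ℝ) ^ (s₁ : ℕ) * θ)).mulVec ψ := by
  change contractR (e s₁) (((H2 ⊗ₖ 1) * CX) *ᵥ tensorVec ψ (phaseState θ)) = _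
  rw [← mulVec_mulVec, contractR_kronecker_one_mulVec, contractR_e_CX_mulVec_tensorVec,
    diagonal_phaseState_add, smul_mulVec, mulVec_smul, mulVec_mulVec]
end
end

section
/- For every φ : ℝ, r ∈ {0, 1}, and s ∈ {0, 1}, one has the 2×2 matrix identity X^{s} · H · R_Z(φ - r·π) = I^r • (X^{(s + r) % 2} · H · R_Z(φ)), where I = Complex.I on the right-hand side is the imaginary unit acting as a global phase. -/
open Matrix Kronecker Complex

noncomputable section

lemma X2_sq : X2 ^ 2 = 1 := by
  simp [X2, sq, one_fin_two]

lemma semiconjBy_H2_Z2_X2 : SemiconjBy H2 Z2 X2 := by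
  simp [SemiconjBy, H2, Z2, X2]

lemma RZ_zero : RZ 0 = 1 := by
  simp [RZ, one_fin_two]

lemma RZ_add (φ θ : ℝ) : RZ (φ + θ) = RZ φ * RZ θ := by
  simp [RZ, mul_add, add_div, exp_add, mul_comm]

lemma RZ_natCast_mul (n : ℕ) (φ : ℝ) : RZ (n * φ) = RZ φ ^ n := by
  induction n with
  | zero => simp [RZ_zero]
  | succ n ih => rw [Nat.cast_succ, add_one_mul, RZ_add, ih, pow_succ]

lemma RZ_neg_pi : RZ (-Real.pi) = I • Z2 := by
  have exp_upper : exp (-(I * (-Real.pi : ℝ) / 2)) = I :=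
    (congrArg exp (by push_cast; ring)).trans exp_pi_div_two_mul_I
  have exp_lower : exp (I * (-Real.pi : ℝ) / 2) = -I :=
    (congrArg exp (by push_cast; ring)).trans exp_neg_pi_div_two_mul_I
  simp only [RZ, exp_upper, exp_lower, Z2, smul_of, smul_cons, smul_empty, smul_eq_mul, mul_one,
    mul_zero, mul_neg]

lemma RZ_sub_natCast_mul_pi (φ : ℝ) (r : ℕ) :
    RZ (φ - r * Real.pi) = I ^ r • (Z2 ^ r * RZ φ) :=
  calc RZ (φ - r * Real.pi)
    _ = RZ (r * -Real.pi + φ) := by congr 1; ring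
    _ = (I • Z2) ^ r * RZ φ := by rw [RZ_add, RZ_natCast_mul, RZ_neg_pi]
    _ = I ^ r • (Z2 ^ r * RZ φ) := by rw [smul_pow, smul_mul_assoc]

theorem byproduct_absorption_general (φ : ℝ) (r s : ℕ) :
    X2 ^ s * H2 * RZ (φ - r * Real.pi) = I ^ r • (X2 ^ ((s + r) % 2) * H2 * RZ φ) :=
  calc X2 ^ s * H2 * RZ (φ - r * Real.pi)
    _ = I ^ r • (X2 ^ s * (H2 * Z2 ^ r) * RZ φ) := by
      rw [RZ_sub_natCast_mul_pi, mul_smul_comm]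
      simp only [mul_assoc]
    _ = I ^ r • (X2 ^ (s + r) * H2 * RZ φ) := by
      rw [(semiconjBy_H2_Z2_X2.pow_right r).eq, ← mul_assoc, ← pow_add]
    _ = I ^ r • (X2 ^ ((s + r) % 2) * H2 * RZ φ) := by
      rw [← pow_eq_pow_mod (s + r) X2_sq]

/-- Eq. (19), byproduct absorption: X^{s} H R_Z(φ - rπ) = i^r • X^{s⊕r} H R_Z(φ). -/
theorem byproduct_absorption (φ : ℝ) (r s : ℕ) (hr : r ≤ 1) (hs : s ≤ 1) :
    X2 ^ s * H2 * RZ (φ - (r : ℝ) * Real.pi)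
      = Complex.I ^ r • (X2 ^ ((s + r) % 2) * H2 * RZ φ) :=
  byproduct_absorption_general φ r s
end
end

section
/- For every 2×2 complex unitary matrix U (Uᴴ · U = 1), there exist δ, φ₁, φ₂, φ₃ : ℝ such that U = exp(I·δ) • ((H · R_Z(φ₁)) · (H · R_Z(φ₂)) · (H · R_Z(φ₃))); that is, every single-qubit unitary equals a product of three J(φ) = H R_Z(φ) operators up to a global phase. -/
open Matrix Kronecker Complex

noncomputable section

/-! Left multiplication by the involution `H` turns `H R_Z(φ₁) · H R_Z(φ₂) · H R_Z(φ₃)` into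
`R_Z(φ₁) · (H R_Z(φ₂) H) · R_Z(φ₃)`, and conjugation by `H` exchanges the `Z` and `X` axes, so the
claim for `U` is the ZXZ Euler decomposition of `H U`. A 2×2 unitary is determined by its first
column and its determinant, because `adjugate W = det W • Wᴴ`; both are prescribed by choosing
the two phases and the mixing angle of the column and taking half the argument of the determinant
as the global phase. -/

/-- The rotation `R_X(φ) = exp(-i φ X / 2)` of a qubit about the `X` axis, the middle factor of the
ZXZ Euler decomposition. -/
def RX (φ : ℝ) : Matrix (Fin 2) (Fin 2) ℂ :=
  !![cos (φ / 2), -I * sin (φ / 2); -I * sin (φ / 2), cos (φ / 2)]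

section Unitary

variable {n 𝕜 : Type*} [Fintype n] [DecidableEq n] [RCLike 𝕜]

lemma adjugate_eq_det_smul_of_mul_eq_one {R : Type*} [CommRing R] {A B : Matrix n n R}
    (h : B * A = 1) : adjugate A = det A • B :=
  calc adjugate A = B * A * adjugate A := by rw [h, Matrix.one_mul]
    _ = det A • B := by rw [Matrix.mul_assoc, mul_adjugate, Matrix.mul_smul, Matrix.mul_one]

lemma sum_norm_sq_col_eq_one_of_conjTranspose_mul_self {A : Matrix n n 𝕜} (hA : Aᴴ * A = 1)
    (j : n) : ∑ i, ‖A i j‖ ^ 2 = 1 := by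
  have hjj : ∑ i, star (A i j) * A i j = 1 := by
    simpa only [mul_apply, conjTranspose_apply, one_apply_eq] using congr_fun₂ hA j j
  simp only [RCLike.star_def, RCLike.conj_mul] at hjj
  exact_mod_cast hjj

lemma norm_det_eq_one_of_conjTranspose_mul_self {A : Matrix n n 𝕜} (hA : Aᴴ * A = 1) :
    ‖det A‖ = 1 :=
  CStarRing.norm_of_mem_unitary (det_of_mem_unitary (mem_unitaryGroup_iff'.mpr hA))

lemma eq_fin_two_of_conjTranspose_mul_self {R : Type*} [CommRing R] [StarRing R]
    {A : Matrix (Fin 2) (Fin 2) R} (hA : Aᴴ * A = 1) :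
    A = !![A 0 0, -(det A * star (A 1 0)); A 1 0, det A * star (A 0 0)] := by
  have hadj := adjugate_eq_det_smul_of_mul_eq_one hA
  rw [adjugate_fin_two] at hadj
  have h₀₁ : -A 0 1 = det A * star (A 1 0) := congr_fun₂ hadj 0 1
  have h₁₁ : A 1 1 = det A * star (A 0 0) := congr_fun₂ hadj 0 0
  rw [← h₀₁, ← h₁₁, neg_neg]
  exact eta_fin_two A

end Unitary

lemma exists_eq_cos_mul_exp_and_eq_sin_mul_exp {z w : ℂ} (h : ‖z‖ ^ 2 + ‖w‖ ^ 2 = 1) :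
    ∃ θ α β : ℝ, z = cos θ * exp (I * α) ∧ w = sin θ * exp (I * β) := by
  have hcos : Real.cos (Real.arccos ‖z‖) = ‖z‖ :=
    Real.cos_arccos (by linarith [norm_nonneg z]) (by nlinarith [sq_nonneg ‖w‖])
  have hsin : Real.sin (Real.arccos ‖z‖) = ‖w‖ := by
    rw [Real.sin_arccos, ← h, add_sub_cancel_left, Real.sqrt_sq (norm_nonneg w)]
  refine ⟨Real.arccos ‖z‖, arg z, arg w, ?_, ?_⟩
  · rw [← ofReal_cos, hcos, mul_comm I, norm_mul_exp_arg_mul_I]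
  · rw [← ofReal_sin, hsin, mul_comm I, norm_mul_exp_arg_mul_I]

lemma H2_mul_mul_H2 (a b c d : ℂ) :
    H2 * !![a, b; c, d] * H2 =
      (1 / 2 : ℂ) • !![a + b + c + d, a - b + c - d; a + b - c - d, a - b - c + d] := by
  have hsqrt : (1 / (Real.sqrt 2 : ℂ)) * (1 / (Real.sqrt 2 : ℂ)) = 1 / 2 := by
    rw [div_mul_div_comm, one_mul, ← ofReal_mul, Real.mul_self_sqrt zero_le_two, ofReal_ofNat]
  rw [H2, Matrix.smul_mul, Matrix.smul_mul, Matrix.mul_smul, smul_smul, hsqrt, mul_fin_two,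
    mul_fin_two]
  ring_nf

lemma H2_mul_H2 : H2 * H2 = 1 := by
  have h := H2_mul_mul_H2 1 0 0 1
  rw [← one_fin_two, Matrix.mul_one] at h
  rw [h, one_fin_two]
  norm_num

lemma conjTranspose_H2 : H2ᴴ = H2 := by
  ext i j
  fin_cases i <;> fin_cases j <;> simp [H2]

lemma H2_mul_RZ_mul_H2 (φ : ℝ) : H2 * RZ φ * H2 = RX φ := by
  have hI : I * φ / 2 = φ / 2 * I := by ring
  have hcos : cos (φ / 2) = (exp (I * φ / 2) + exp (-(I * φ / 2))) / 2 := by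
    rw [cos, hI, neg_mul]
  have hsin : -I * sin (φ / 2) = (exp (-(I * φ / 2)) - exp (I * φ / 2)) / 2 := by
    rw [sin, hI, neg_mul (φ / 2 : ℂ)]
    linear_combination (exp (φ / 2 * I) - exp (-(φ / 2 * I))) / 2 * I_mul_I
  rw [RZ, H2_mul_mul_H2, RX, hcos, hsin]
  simp only [smul_of, smul_cons, smul_empty, smul_eq_mul]
  ring_nf

lemma exp_smul_RZ_mul_RX_mul_RZ (δ φ₁ φ₂ φ₃ : ℝ) :
    exp (I * δ) • (RZ φ₁ * RX φ₂ * RZ φ₃) =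
      !![cos (φ₂ / 2) * exp (I * (δ - (φ₁ + φ₃) / 2)),
          -I * sin (φ₂ / 2) * exp (I * (δ - (φ₁ - φ₃) / 2));
        -I * sin (φ₂ / 2) * exp (I * (δ + (φ₁ - φ₃) / 2)),
          cos (φ₂ / 2) * exp (I * (δ + (φ₁ + φ₃) / 2))] := by
  have hexp (c x y z : ℂ) : exp x * (exp y * c * exp z) = c * exp (x + y + z) := by
    rw [exp_add, exp_add]; ring
  simp only [RZ, RX, mul_fin_two, mul_zero, zero_mul, add_zero, zero_add, smul_of, smul_cons,
    smul_empty, smul_eq_mul, hexp]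
  ring_nf

lemma exists_eq_exp_smul_RZ_mul_RX_mul_RZ {W : Matrix (Fin 2) (Fin 2) ℂ} (hW : Wᴴ * W = 1) :
    ∃ δ φ₁ φ₂ φ₃ : ℝ, W = exp (I * δ) • (RZ φ₁ * RX φ₂ * RZ φ₃) := by
  obtain ⟨γ, hγ⟩ :=
    (norm_eq_one_iff (det W)).mp (norm_det_eq_one_of_conjTranspose_mul_self hW)
  -- The off-diagonal entries of `RX` carry a factor `-I`, so the phase `β` is read off `I * W 1 0`.
  have hcol : ‖W 0 0‖ ^ 2 + ‖I * W 1 0‖ ^ 2 = 1 := by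
    simpa [Fin.sum_univ_two] using sum_norm_sq_col_eq_one_of_conjTranspose_mul_self hW 0
  obtain ⟨θ, α, β, h₀₀, hI₁₀⟩ := exists_eq_cos_mul_exp_and_eq_sin_mul_exp hcol
  have h₁₀ : W 1 0 = -I * sin θ * exp (I * β) := by
    rw [mul_assoc, ← hI₁₀, ← mul_assoc, neg_mul, I_mul_I, neg_neg, one_mul]
  have hphase (r x : ℝ) : det W * star (r * exp (I * x)) = r * exp (I * (γ - x)) := by
    rw [← hγ, star_mul', star_def, conj_ofReal, ← exp_conj, map_mul, conj_I,
      conj_ofReal, mul_left_comm, ← exp_add]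
    ring_nf
  have h₀₁ : -(det W * star (W 1 0)) = -I * sin θ * exp (I * (γ - β)) := by
    rw [h₁₀, mul_assoc, star_mul', star_neg, star_def, conj_I, neg_neg, ← star_def, ← ofReal_sin,
      mul_left_comm, hphase, mul_assoc, neg_mul]
  have h₁₁ : det W * star (W 0 0) = cos θ * exp (I * (γ - α)) := by
    rw [h₀₀, ← ofReal_cos, hphase]
  -- The solution of `2δ = γ`, `δ - (φ₁ + φ₃) / 2 = α`, `δ + (φ₁ - φ₃) / 2 = β`, `φ₂ / 2 = θ`.
  refine ⟨γ / 2, β - α, 2 * θ, γ - α - β, ?_⟩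
  rw [eq_fin_two_of_conjTranspose_mul_self hW, h₀₁, h₁₁, h₀₀, h₁₀, exp_smul_RZ_mul_RX_mul_RZ]
  push_cast
  ring_nf

/-- Every single-qubit unitary equals a product of three J(φ) = H R_Z(φ)
operators up to a global phase. -/
theorem three_J_decomposition (U : Matrix (Fin 2) (Fin 2) ℂ)
    (hU : Uᴴ * U = 1) :
    ∃ δ φ₁ φ₂ φ₃ : ℝ,
      U = Complex.exp (Complex.I * δ) •
            ((H2 * RZ φ₁) * (H2 * RZ φ₂) * (H2 * RZ φ₃)) := by
  have hHU : (H2 * U)ᴴ * (H2 * U) = 1 := by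
    rw [conjTranspose_mul, conjTranspose_H2, Matrix.mul_assoc, ← Matrix.mul_assoc H2, H2_mul_H2,
      Matrix.one_mul, hU]
  obtain ⟨δ, φ₁, φ₂, φ₃, h⟩ := exists_eq_exp_smul_RZ_mul_RX_mul_RZ hHU
  refine ⟨δ, φ₁, φ₂, φ₃, ?_⟩
  calc U = H2 * (H2 * U) := by rw [← Matrix.mul_assoc, H2_mul_H2, Matrix.one_mul]
    _ = H2 * exp (I * δ) • (RZ φ₁ * (H2 * RZ φ₂ * H2) * RZ φ₃) := by rw [h, H2_mul_RZ_mul_H2]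
    _ = exp (I * δ) • (H2 * RZ φ₁ * (H2 * RZ φ₂) * (H2 * RZ φ₃)) := by
      simp only [Matrix.mul_smul, Matrix.mul_assoc]
end
end
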